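/- arXiv:1503.02429 — 2 statements merged into one kernel-verified Lean document; each statement's English description precedes it below -/
import Mathlib

section
/- Let ψ(x) = −ln|x| on ℝ²∖{0}. Suppose γ: ℝ × [0,T) → ℝ²∖{0} evolves by ψMCF, and for every t the closed curve γ(·,t) has turning number 1; let A(t) denote its signed area and w(t) its winding number about the origin. Then A′(t) = −2π(1 − w(t)) for every t ∈ [0,T). In particular, if w(t) = 0 for all t then A(t) = A(0) − 2πt (so the signed area reaches 0 exactly at time A(0)/(2π)), while if w(t) = 1 for all t then A(t) = A(0) for all t. -/
noncomputable section
open Real Set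

def dot2 (v w : ℝ × ℝ) : ℝ := v.1 * w.1 + v.2 * w.2

def nrm2 (v : ℝ × ℝ) : ℝ := Real.sqrt (v.1 ^ 2 + v.2 ^ 2)

def Jrot (v : ℝ × ℝ) : ℝ × ℝ := (-v.2, v.1)

structure IsClosedCurve (γ : ℝ → ℝ × ℝ) : Prop where
  smooth : ContDiff ℝ (⊤ : ℕ∞) γ
  periodic : Function.Periodic γ (2 * π)
  regular : ∀ u, deriv γ u ≠ 0

def tangentC (γ : ℝ → ℝ × ℝ) (u : ℝ) : ℝ × ℝ := (nrm2 (deriv γ u))⁻¹ • deriv γ u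

def normalC (γ : ℝ → ℝ × ℝ) (u : ℝ) : ℝ × ℝ := Jrot (tangentC γ u)

def arcDeriv {F : Type*} [NormedAddCommGroup F] [NormedSpace ℝ F]
    (γ : ℝ → ℝ × ℝ) (h : ℝ → F) (u : ℝ) : F :=
  (nrm2 (deriv γ u))⁻¹ • deriv h u

def curvature (γ : ℝ → ℝ × ℝ) (u : ℝ) : ℝ :=
  dot2 (arcDeriv γ (tangentC γ) u) (normalC γ u)

def psiCurv (ψ : ℝ × ℝ → ℝ) (γ : ℝ → ℝ × ℝ) (u : ℝ) : ℝ :=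
  curvature γ u - fderiv ℝ ψ (γ u) (normalC γ u)

def IsPsiMinimal (ψ : ℝ × ℝ → ℝ) (γ : ℝ → ℝ × ℝ) : Prop :=
  ∀ u, psiCurv ψ γ u = 0

def signedArea (γ : ℝ → ℝ × ℝ) : ℝ :=
  (1/2) * ∫ u in (0:ℝ)..(2*π), ((γ u).1 * (deriv γ u).2 - (γ u).2 * (deriv γ u).1)

def turningNumber (γ : ℝ → ℝ × ℝ) : ℝ :=
  (1/(2*π)) * ∫ u in (0:ℝ)..(2*π), curvature γ u * nrm2 (deriv γ u)

def windingNumber (γ : ℝ → ℝ × ℝ) : ℝ :=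
  (1/(2*π)) * ∫ u in (0:ℝ)..(2*π),
    ((γ u).1 * (deriv γ u).2 - (γ u).2 * (deriv γ u).1) / (nrm2 (γ u))^2

def hess2 (ψ : ℝ × ℝ → ℝ) (x v : ℝ × ℝ) : ℝ :=
  fderiv ℝ (fun y => fderiv ℝ ψ y v) x v

def SmoothFamily (γ : ℝ → ℝ → ℝ × ℝ) : Prop :=
  ContDiff ℝ (⊤ : ℕ∞) fun p : ℝ × ℝ => γ p.1 p.2

open Function (uncurry)

/-! Along the flow `∂ₜγ = k_ψ N` the first variation of area gives `A' = -∫ k_ψ ds`. For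
`ψ = -log |x|` one has `-⟨∇ψ, N⟩ ds = ⟨x, N⟩ / |x|² ds = -det (γ, γ') / |γ|² du`, minus the
differential of the polar angle, so the integral of `k_ψ` is the total curvature
`2π · turning number` minus the total polar angle `2π · winding number`. -/

section ParametricIntegrals

variable {E F G : Type*} [NormedAddCommGroup E] [NormedSpace ℝ E]
  [NormedAddCommGroup F] [NormedSpace ℝ F] [NormedAddCommGroup G] [NormedSpace ℝ G]
  {f : ℝ → ℝ → E} {g : ℝ → ℝ → F}

lemma hasDerivAt_curry_left {t u : ℝ} (hf : DifferentiableAt ℝ (uncurry f) (t, u)) :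
    HasDerivAt (fun τ => f τ u) (fderiv ℝ (uncurry f) (t, u) (1, 0)) t :=
  hf.hasFDerivAt.comp_hasDerivAt (f := fun τ => (τ, u)) t
    ((hasDerivAt_id' t).prodMk (hasDerivAt_const t u))

lemma hasDerivAt_curry_right {t u : ℝ} (hf : DifferentiableAt ℝ (uncurry f) (t, u)) :
    HasDerivAt (f t) (fderiv ℝ (uncurry f) (t, u) (0, 1)) u :=
  hf.hasFDerivAt.comp_hasDerivAt u ((hasDerivAt_const u t).prodMk (hasDerivAt_id' u))

lemma contDiff_deriv_curry_left {m n : WithTop ℕ∞} (hf : ContDiff ℝ n (uncurry f))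
    (hmn : m + 1 ≤ n) : ContDiff ℝ m (uncurry fun t u => deriv (fun τ => f τ u) t) := by
  have hd := (hf.of_le (le_add_self.trans hmn)).differentiable one_ne_zero
  simp only [(hasDerivAt_curry_left (hd _)).deriv]
  exact (hf.fderiv_right hmn).clm_apply contDiff_const

lemma contDiff_deriv_curry_right {m n : WithTop ℕ∞} (hf : ContDiff ℝ n (uncurry f))
    (hmn : m + 1 ≤ n) : ContDiff ℝ m (uncurry fun t u => deriv (f t) u) := by
  have hd := (hf.of_le (le_add_self.trans hmn)).differentiable one_ne_zero
  simp only [(hasDerivAt_curry_right (hd _)).deriv]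
  exact (hf.fderiv_right hmn).clm_apply contDiff_const

lemma hasDerivAt_deriv_curry_right (hf : ContDiff ℝ 2 (uncurry f)) (t u : ℝ) :
    HasDerivAt (fun τ => deriv (f τ) u)
      (deriv (fun v => deriv (fun τ => f τ v) t) u) t := by
  have hd : Differentiable ℝ (uncurry f) := hf.differentiable two_ne_zero
  have hd' : DifferentiableAt ℝ (fderiv ℝ (uncurry f)) (t, u) :=
    (hf.fderiv_right (m := 1) (by norm_num)).differentiable one_ne_zero _
  have hsymm := (hf.contDiffAt (x := (t, u))).isSymmSndFDerivAt (by simp)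
  simp only [(hasDerivAt_curry_left (hd _)).deriv, (hasDerivAt_curry_right (hd _)).deriv]
  have hu := ((ContinuousLinearMap.apply ℝ E ((1, 0) : ℝ × ℝ)).hasFDerivAt.comp _
    hd'.hasFDerivAt).comp_hasDerivAt u ((hasDerivAt_const u t).prodMk (hasDerivAt_id u))
  have ht := ((ContinuousLinearMap.apply ℝ E ((0, 1) : ℝ × ℝ)).hasFDerivAt.comp _
    hd'.hasFDerivAt).comp_hasDerivAt t ((hasDerivAt_id t).prodMk (hasDerivAt_const t u))
  exact ht.congr_deriv ((hsymm _ _).trans hu.deriv.symm)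

lemma hasDerivAt_integral_of_continuous_deriv {f' : ℝ → ℝ → E} (hf : ∀ τ, Continuous (f τ))
    (hf' : Continuous (uncurry f'))
    (hderiv : ∀ τ u, HasDerivAt (fun σ => f σ u) (f' τ u) τ) (a b t : ℝ) :
    HasDerivAt (fun τ => ∫ u in a..b, f τ u) (∫ u in a..b, f' t u) t := by
  obtain ⟨C, hC⟩ := ((isCompact_Icc (a := t - 1) (b := t + 1)).prod
    (isCompact_uIcc (a := a) (b := b))).exists_bound_of_continuousOn hf'.continuousOn
  have hf't : Continuous (f' t) := hf'.comp (by fun_prop : Continuous fun u : ℝ => (t, u))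
  exact (intervalIntegral.hasDerivAt_integral_of_dominated_loc_of_deriv_le
    (bound := fun _ => C) (Icc_mem_nhds (by linarith) (by linarith))
    (.of_forall fun τ => (hf τ).aestronglyMeasurable) ((hf t).intervalIntegrable a b)
    hf't.aestronglyMeasurable
    (.of_forall fun u hu τ hτ => hC (τ, u) ⟨hτ, uIoc_subset_uIcc hu⟩)
    intervalIntegrable_const (.of_forall fun u _ τ _ => hderiv τ u)).2

lemma integral_bilinear_deriv_eq_sub [CompleteSpace G] (B : E →L[ℝ] F →L[ℝ] G)
    {p : ℝ → E} {q : ℝ → F} (hp : ContDiff ℝ 1 p) (hq : ContDiff ℝ 1 q) (a b : ℝ) :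
    ∫ u in a..b, B (p u) (deriv q u)
      = B (p b) (q b) - B (p a) (q a) - ∫ u in a..b, B (deriv p u) (q u) := by
  have hp' := hp.continuous_deriv le_rfl
  have hq' := hq.continuous_deriv le_rfl
  have h₁ : Continuous fun u => B (p u) (deriv q u) :=
    (B.continuous.comp hp.continuous).clm_apply hq'
  have h₂ : Continuous fun u => B (deriv p u) (q u) :=
    (B.continuous.comp hp').clm_apply hq.continuous
  have hderiv (u : ℝ) : HasDerivAt (fun v => B (p v) (q v))
      (B (p u) (deriv q u) + B (deriv p u) (q u)) u :=
    B.hasDerivAt_of_bilinear (fun _ => (hp.differentiable one_ne_zero u).hasDerivAt)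
      fun _ => (hq.differentiable one_ne_zero u).hasDerivAt
  rw [← intervalIntegral.integral_eq_sub_of_hasDerivAt (fun u _ => hderiv u)
    ((h₁.add h₂).intervalIntegrable a b), intervalIntegral.integral_add
    (h₁.intervalIntegrable a b) (h₂.intervalIntegrable a b), add_sub_cancel_right]

lemma hasDerivAt_integral_bilinear_deriv (B : E →L[ℝ] F →L[ℝ] G)
    (hf : ContDiff ℝ 1 (uncurry f)) (hg : ContDiff ℝ 2 (uncurry g)) (a b t : ℝ) :
    HasDerivAt (fun τ => ∫ u in a..b, B (f τ u) (deriv (g τ) u))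
      (∫ u in a..b, (B (deriv (fun τ => f τ u) t) (deriv (g t) u)
        + B (f t u) (deriv (fun v => deriv (fun τ => g τ v) t) u))) t := by
  have hft := (contDiff_deriv_curry_left (m := 0) hf (zero_add 1).le).continuous
  have hgu := (contDiff_deriv_curry_right hg one_add_one_eq_two.le).continuous
  have hgt := contDiff_deriv_curry_left hg one_add_one_eq_two.le
  have hgtu := (contDiff_deriv_curry_right (m := 0) hgt (zero_add 1).le).continuous
  have hintegrand (τ : ℝ) : Continuous fun u => B (f τ u) (deriv (g τ) u) :=
    ((B.continuous.comp hf.continuous).clm_apply hgu).comp (Continuous.prodMk_right τ)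
  have hderiv : Continuous (uncurry fun τ u => B (deriv (fun σ => f σ u) τ) (deriv (g τ) u)
      + B (f τ u) (deriv (fun v => deriv (fun σ => g σ v) τ) u)) :=
    ((B.continuous.comp hft).clm_apply hgu).add
      ((B.continuous.comp hf.continuous).clm_apply hgtu)
  refine hasDerivAt_integral_of_continuous_deriv hintegrand hderiv (fun τ u => ?_) a b t
  have hfτ := hasDerivAt_curry_left (hf.differentiable one_ne_zero (τ, u))
  exact (B.hasDerivAt_of_bilinear (fun _ => hfτ.differentiableAt.hasDerivAt)
    fun _ => hasDerivAt_deriv_curry_right hg τ u).congr_deriv (add_comm _ _)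

lemma hasDerivAt_integral_bilinear_deriv_by_parts [CompleteSpace G] (B : E →L[ℝ] F →L[ℝ] G)
    (hf : ContDiff ℝ 1 (uncurry f)) (hg : ContDiff ℝ 2 (uncurry g)) (a b t : ℝ) :
    HasDerivAt (fun τ => ∫ u in a..b, B (f τ u) (deriv (g τ) u))
      ((∫ u in a..b, B (deriv (fun τ => f τ u) t) (deriv (g t) u))
        + (B (f t b) (deriv (fun τ => g τ b) t) - B (f t a) (deriv (fun τ => g τ a) t)
        - ∫ u in a..b, B (deriv (f t) u) (deriv (fun τ => g τ u) t))) t := by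
  have hft := (contDiff_deriv_curry_left (m := 0) hf (zero_add 1).le).continuous
  have hgu := (contDiff_deriv_curry_right hg one_add_one_eq_two.le).continuous
  have hgt := contDiff_deriv_curry_left hg one_add_one_eq_two.le
  have hgtu := (contDiff_deriv_curry_right (m := 0) hgt (zero_add 1).le).continuous
  have hslice : Continuous fun u : ℝ => (t, u) := Continuous.prodMk_right t
  refine (hasDerivAt_integral_bilinear_deriv B hf hg a b t).congr_deriv ?_
  rw [intervalIntegral.integral_add, integral_bilinear_deriv_eq_sub B (p := f t)
    (q := fun u => deriv (fun τ => g τ u) t) (hf.comp (contDiff_prodMk_right t))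
    (hgt.comp (contDiff_prodMk_right t))]
  · exact (((B.continuous.comp hft).clm_apply hgu).comp hslice).intervalIntegrable a b
  · exact (((B.continuous.comp hf.continuous).clm_apply hgtu).comp hslice).intervalIntegrable a b

end ParametricIntegrals

lemma sub_eq_smul_of_hasDerivAt_const {E : Type*} [NormedAddCommGroup E] [NormedSpace ℝ E]
    {I : Set ℝ} (hI : I.OrdConnected) {f : ℝ → E} {c : E} (hf : ∀ t ∈ I, HasDerivAt f c t)
    {s t : ℝ} (hs : s ∈ I) (ht : t ∈ I) : f t - f s = (t - s) • c := by
  have hderiv : ∀ r ∈ I, HasDerivWithinAt (fun τ => f τ - τ • c) 0 I r := fun r hr =>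
    (((hf r hr).sub ((hasDerivAt_id' r).smul_const c)).congr_deriv
      (by rw [one_smul, sub_self])).hasDerivWithinAt
  have hzero := hI.convex.norm_image_sub_le_of_norm_hasDerivWithin_le (C := 0) hderiv
    (fun _ _ => norm_zero.le) hs ht
  rw [zero_mul, norm_le_zero_iff] at hzero
  rw [sub_smul, ← sub_eq_zero, ← hzero]
  abel

/-- The area form `det (v, w)` of the plane, bundled as a continuous bilinear map so that the
general rules for differentiating bilinear expressions apply to it. -/
def areaForm : ℝ × ℝ →L[ℝ] ℝ × ℝ →L[ℝ] ℝ :=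
  (ContinuousLinearMap.mul ℝ ℝ).bilinearComp (.fst ℝ ℝ ℝ) (.snd ℝ ℝ ℝ)
    - (ContinuousLinearMap.mul ℝ ℝ).bilinearComp (.snd ℝ ℝ ℝ) (.fst ℝ ℝ ℝ)

lemma areaForm_apply (v w : ℝ × ℝ) : areaForm v w = v.1 * w.2 - v.2 * w.1 := rfl

lemma areaForm_swap (v w : ℝ × ℝ) : areaForm v w = -areaForm w v := by
  simp only [areaForm_apply]
  ring

lemma hasDerivAt_signedArea {γ : ℝ → ℝ → ℝ × ℝ} (hγ : ContDiff ℝ 2 (uncurry γ)) {t : ℝ}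
    (hclosed : γ t (2 * π) = γ t 0)
    (hvelocity : deriv (fun τ => γ τ (2 * π)) t = deriv (fun τ => γ τ 0) t) :
    HasDerivAt (fun τ => signedArea (γ τ))
      (∫ u in (0 : ℝ)..(2 * π), areaForm (deriv (fun τ => γ τ u) t) (deriv (γ t) u)) t := by
  refine ((hasDerivAt_integral_bilinear_deriv_by_parts areaForm (hγ.of_le one_le_two) hγ
    0 (2 * π) t).const_mul (1 / 2)).congr_deriv ?_
  simp only [hclosed, hvelocity, areaForm_swap (deriv (γ t) _), intervalIntegral.integral_neg]
  ring

lemma sq_add_sq_pos {v : ℝ × ℝ} (hv : v ≠ 0) : 0 < v.1 ^ 2 + v.2 ^ 2 := by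
  contrapose! hv
  ext <;> simp only [Prod.fst_zero, Prod.snd_zero] <;> nlinarith [sq_nonneg v.1, sq_nonneg v.2]

lemma nrm2_sq (v : ℝ × ℝ) : nrm2 v ^ 2 = v.1 ^ 2 + v.2 ^ 2 :=
  Real.sq_sqrt (by positivity)

lemma nrm2_pos {v : ℝ × ℝ} (hv : v ≠ 0) : 0 < nrm2 v :=
  Real.sqrt_pos.mpr (sq_add_sq_pos hv)

lemma contDiffAt_nrm2 {n : WithTop ℕ∞} {v : ℝ × ℝ} (hv : v ≠ 0) : ContDiffAt ℝ n nrm2 v :=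
  ContDiffAt.sqrt (by fun_prop) (sq_add_sq_pos hv).ne'

section Curves

variable {c : ℝ → ℝ × ℝ} {u : ℝ}

lemma areaForm_normalC_deriv (c : ℝ → ℝ × ℝ) (u : ℝ) :
    areaForm (normalC c u) (deriv c u) = -nrm2 (deriv c u) := by
  have hsq : areaForm (normalC c u) (deriv c u)
      = -((nrm2 (deriv c u))⁻¹ * nrm2 (deriv c u) ^ 2) := by
    simp only [areaForm_apply, normalC, Jrot, tangentC, Prod.smul_fst, Prod.smul_snd, smul_eq_mul,
      nrm2_sq]
    ring
  rw [hsq, sq, ← mul_assoc, inv_mul_mul_self]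

lemma dot2_normalC_mul_nrm2_deriv (x : ℝ × ℝ) (hu : deriv c u ≠ 0) :
    dot2 x (normalC c u) * nrm2 (deriv c u) = -areaForm x (deriv c u) := by
  have hspeed := (nrm2_pos hu).ne'
  simp only [dot2, normalC, Jrot, tangentC, areaForm_apply, Prod.smul_fst, Prod.smul_snd,
    smul_eq_mul]
  field_simp
  ring

lemma periodic_deriv {E : Type*} [NormedAddCommGroup E] [NormedSpace ℝ E] {f : ℝ → E} {L : ℝ}
    (hf : Function.Periodic f L) : Function.Periodic (deriv f) L := fun u => by
  rw [← deriv_comp_add_const, hf.funext]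

lemma periodic_psiCurv_smul_normalC (ψ : ℝ × ℝ → ℝ) {L : ℝ} (hc : Function.Periodic c L) :
    Function.Periodic (fun u => psiCurv ψ c u • normalC c u) L := by
  have hderiv := periodic_deriv hc
  have htangent : Function.Periodic (tangentC c) L := fun u => by
    simp only [tangentC, hderiv u]
  intro u
  simp only [psiCurv, curvature, arcDeriv, normalC, hc u, hderiv u, htangent u,
    periodic_deriv htangent u]

lemma contDiff_tangentC {n : WithTop ℕ∞} (hc : ContDiff ℝ (n + 1) c) (hreg : ∀ u, deriv c u ≠ 0) :
    ContDiff ℝ n (tangentC c) := by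
  have hderiv : ContDiff ℝ n (deriv c) := hc.deriv'
  have hspeed : ContDiff ℝ n fun u => nrm2 (deriv c u) :=
    contDiff_iff_contDiffAt.mpr fun u => (contDiffAt_nrm2 (hreg u)).comp u hderiv.contDiffAt
  exact (hspeed.inv fun u => (nrm2_pos (hreg u)).ne').smul hderiv

lemma continuous_curvature (hc : ContDiff ℝ 2 c) (hreg : ∀ u, deriv c u ≠ 0) :
    Continuous (curvature c) := by
  have htangent : ContDiff ℝ 1 (tangentC c) := contDiff_tangentC (n := 1) hc hreg
  have hderiv : Continuous (deriv c) := hc.continuous_deriv (by norm_num)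
  have hspeed : Continuous fun u => (nrm2 (deriv c u))⁻¹ :=
    Continuous.inv₀ (by unfold nrm2; fun_prop) fun u => (nrm2_pos (hreg u)).ne'
  have hT := htangent.continuous
  have hT' := hspeed.smul (htangent.continuous_deriv le_rfl)
  exact (hT'.fst.mul hT.snd.neg).add (hT'.snd.mul hT.fst)

end Curves

/-- `γ` solves the `ψ`-mean-curvature flow equation `∂ₜγ = k_ψ N` at the time `t`. -/
def IsPsiMCFAt (ψ : ℝ × ℝ → ℝ) (γ : ℝ → ℝ → ℝ × ℝ) (t : ℝ) : Prop :=
  ∀ u, deriv (fun τ => γ τ u) t = psiCurv ψ (γ t) u • normalC (γ t) u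

lemma hasDerivAt_signedArea_of_isPsiMCFAt {ψ : ℝ × ℝ → ℝ} {γ : ℝ → ℝ → ℝ × ℝ} {t : ℝ}
    (hγ : ContDiff ℝ 2 (uncurry γ)) (hper : Function.Periodic (γ t) (2 * π))
    (hflow : IsPsiMCFAt ψ γ t) :
    HasDerivAt (fun τ => signedArea (γ τ))
      (-∫ u in (0 : ℝ)..(2 * π), psiCurv ψ (γ t) u * nrm2 (deriv (γ t) u)) t := by
  have hvelocity : deriv (fun τ => γ τ (2 * π)) t = deriv (fun τ => γ τ 0) t := by
    rw [hflow, hflow]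
    exact (periodic_psiCurv_smul_normalC ψ hper).eq
  refine (hasDerivAt_signedArea hγ hper.eq hvelocity).congr_deriv ?_
  simp only [hflow _, map_smul, FunLike.coe_smul, Pi.smul_apply, smul_eq_mul,
    areaForm_normalC_deriv, mul_neg, intervalIntegral.integral_neg]

/-- The radial density `ψ(x) = -log |x|`, with the junk value `0` at the origin. -/
def criticalDensity (x : ℝ × ℝ) : ℝ := -Real.log (nrm2 x)

lemma hasFDerivAt_criticalDensity {x : ℝ × ℝ} (hx : x ≠ 0) :
    HasFDerivAt criticalDensity
      (-(nrm2 x ^ 2)⁻¹ • (x.1 • .fst ℝ ℝ ℝ + x.2 • .snd ℝ ℝ ℝ)) x := by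
  have heq : criticalDensity = fun y => -(1 / 2 : ℝ) * Real.log (y.1 ^ 2 + y.2 ^ 2) := by
    funext y
    rw [criticalDensity, nrm2, Real.log_sqrt (by positivity)]
    ring
  rw [heq, nrm2_sq]
  have hlog := (((hasFDerivAt_fst (𝕜 := ℝ) (p := x)).pow 2).add
    ((hasFDerivAt_snd (𝕜 := ℝ) (p := x)).pow 2)).log (sq_add_sq_pos hx).ne'
  refine (hlog.const_mul (-(1 / 2 : ℝ))).congr_fderiv ?_
  simp only [Pi.add_apply, Nat.add_one_sub_one, pow_one, nsmul_eq_mul, Nat.cast_ofNat]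
  module

lemma psiCurv_criticalDensity_mul_nrm2_deriv {c : ℝ → ℝ × ℝ} {u : ℝ} (hu : c u ≠ 0)
    (hreg : deriv c u ≠ 0) :
    psiCurv criticalDensity c u * nrm2 (deriv c u)
      = curvature c u * nrm2 (deriv c u) - areaForm (c u) (deriv c u) / nrm2 (c u) ^ 2 := by
  have hgrad : fderiv ℝ criticalDensity (c u) (normalC c u)
      = -(dot2 (c u) (normalC c u) / nrm2 (c u) ^ 2) := by
    rw [(hasFDerivAt_criticalDensity hu).fderiv]
    simp only [dot2, add_apply, smul_apply, ContinuousLinearMap.coe_fst', smul_eq_mul,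
      ContinuousLinearMap.coe_snd']
    ring
  rw [psiCurv, hgrad, ← neg_neg (areaForm _ _), ← dot2_normalC_mul_nrm2_deriv _ hreg]
  ring

lemma integral_psiCurv_criticalDensity {c : ℝ → ℝ × ℝ} (hc : ContDiff ℝ 2 c)
    (hreg : ∀ u, deriv c u ≠ 0) (havoid : ∀ u, c u ≠ 0) :
    ∫ u in (0 : ℝ)..(2 * π), psiCurv criticalDensity c u * nrm2 (deriv c u)
      = 2 * π * (turningNumber c - windingNumber c) := by
  have hderiv : Continuous (deriv c) := hc.continuous_deriv (by norm_num)
  have hcurv : Continuous fun u => curvature c u * nrm2 (deriv c u) :=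
    (continuous_curvature hc hreg).mul (by unfold nrm2; fun_prop)
  have hangle : Continuous fun u => areaForm (c u) (deriv c u) / nrm2 (c u) ^ 2 :=
    ((areaForm.continuous.comp hc.continuous).clm_apply hderiv).div
      (by have := hc.continuous; unfold nrm2; fun_prop)
      fun u => (pow_pos (nrm2_pos (havoid u)) 2).ne'
  simp only [psiCurv_criticalDensity_mul_nrm2_deriv (havoid _) (hreg _)]
  rw [intervalIntegral.integral_sub (hcurv.intervalIntegrable _ _)
    (hangle.intervalIntegrable _ _)]
  simp only [turningNumber, windingNumber, areaForm_apply]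
  field_simp

theorem area_evolution_critical_density_general {I : Set ℝ} (hI : I.OrdConnected)
    {γ : ℝ → ℝ → ℝ × ℝ} (hfam : ContDiff ℝ 2 (uncurry γ))
    (hper : ∀ t ∈ I, Function.Periodic (γ t) (2 * π)) (hreg : ∀ t ∈ I, ∀ u, deriv (γ t) u ≠ 0)
    (havoid : ∀ t ∈ I, ∀ u, γ t u ≠ 0) (hflow : ∀ t ∈ I, IsPsiMCFAt criticalDensity γ t) :
    (∀ t ∈ I, HasDerivAt (fun τ => signedArea (γ τ))
        (-(2 * π) * (turningNumber (γ t) - windingNumber (γ t))) t)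
    ∧ ∀ m n : ℝ, (∀ t ∈ I, turningNumber (γ t) = m) → (∀ t ∈ I, windingNumber (γ t) = n) →
        ∀ s ∈ I, ∀ t ∈ I,
          signedArea (γ t) = signedArea (γ s) - 2 * π * (m - n) * (t - s) := by
  have hderiv : ∀ t ∈ I, HasDerivAt (fun τ => signedArea (γ τ))
      (-(2 * π) * (turningNumber (γ t) - windingNumber (γ t))) t := fun t ht => by
    have hγt : ContDiff ℝ 2 (γ t) := hfam.comp (by fun_prop : ContDiff ℝ 2 fun u : ℝ => (t, u))
    rw [neg_mul, ← integral_psiCurv_criticalDensity hγt (hreg t ht) (havoid t ht)]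
    exact hasDerivAt_signedArea_of_isPsiMCFAt hfam (hper t ht) (hflow t ht)
  refine ⟨hderiv, fun m n hm hn s hs t ht => ?_⟩
  have hconst : ∀ r ∈ I, HasDerivAt (fun τ => signedArea (γ τ)) (-(2 * π) * (m - n)) r :=
    fun r hr => by simpa only [hm r hr, hn r hr] using hderiv r hr
  have haffine := sub_eq_smul_of_hasDerivAt_const hI hconst hs ht
  rw [smul_eq_mul] at haffine
  linear_combination haffine

/-- evolution of the signed area under ψMCF for the critical
radial density ψ(x) = −ln|x| on ℝ²∖{0}. -/
theorem area_evolution_critical_density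
    (T : ℝ) (hT : 0 < T) (γ : ℝ → ℝ → ℝ × ℝ)
    (hfam : SmoothFamily γ)
    (hclosed : ∀ t ∈ Set.Ico (0:ℝ) T, IsClosedCurve (γ t))
    (havoid : ∀ t ∈ Set.Ico (0:ℝ) T, ∀ u : ℝ, γ t u ≠ 0)
    (hflow : ∀ t ∈ Set.Ico (0:ℝ) T, ∀ u : ℝ,
      deriv (fun τ => γ τ u) t
        = psiCurv (fun x => - Real.log (nrm2 x)) (γ t) u • normalC (γ t) u)
    (hturn : ∀ t ∈ Set.Ico (0:ℝ) T, turningNumber (γ t) = 1) :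
    (∀ t ∈ Set.Ico (0:ℝ) T,
        HasDerivAt (fun τ => signedArea (γ τ))
          (-(2 * π) * (1 - windingNumber (γ t))) t)
    ∧ ((∀ t ∈ Set.Ico (0:ℝ) T, windingNumber (γ t) = 0) →
        ∀ t ∈ Set.Ico (0:ℝ) T,
          signedArea (γ t) = signedArea (γ 0) - 2 * π * t)
    ∧ ((∀ t ∈ Set.Ico (0:ℝ) T, windingNumber (γ t) = 1) →
        ∀ t ∈ Set.Ico (0:ℝ) T, signedArea (γ t) = signedArea (γ 0)) := by
  obtain ⟨hderiv, haffine⟩ := area_evolution_critical_density_general ordConnected_Ico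
    (contDiff_infty.mp hfam 2) (fun t ht => (hclosed t ht).periodic)
    (fun t ht => (hclosed t ht).regular) havoid hflow
  have h₀ : (0 : ℝ) ∈ Ico 0 T := ⟨le_rfl, hT⟩
  exact ⟨fun t ht => by simpa only [hturn t ht] using hderiv t ht,
    fun hw t ht => by simpa using haffine 1 0 hturn hw 0 h₀ t ht,
    fun hw t ht => by simpa using haffine 1 1 hturn hw 0 h₀ t ht⟩
end
end

section
/- Let γ: ℝ × [0,T) → ℝ² evolve by ψMCF, with ψ smooth on an open set containing all the images γ(ℝ,t). Then the ψ-curvature satisfies the parabolic equation ∂_t k_ψ = ∂_s² k_ψ + ⟨∇ψ(γ), T⟩ · ∂_s k_ψ + k_ψ · ( k² − (Hess ψ)(γ)(N,N) ), where (Hess ψ)(γ)(N,N) is the second derivative of ψ at γ(u,t) in the direction N. -/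
noncomputable section
open Real Set

/-!
Let `γ_t = f N` be any normal variation, `v` the speed and `∂_s = v⁻¹ ∂_u`. Rotating the unit
tangent gives the Frenet equation `T_u = v k N` in space and, since `γ_ut = (f N)_u`, the equation
`T_t = f_s N` in time. Equality of the mixed partials `T_ut = T_tu`, read along `N`, is the
compatibility condition `(v k)_t = (f_s)_u`. Together with `v_t = -f k v` it gives
`k_t = f_ss + k² f`, and `N_t = -f_s T` accounts for the gradient term of the `ψ`-curvature.
The flow is the case `f = k_ψ`.
-/

open scoped Topology ContDiff

section MixedPartials

variable {E : Type*} [NormedAddCommGroup E] [NormedSpace ℝ E] {t u : ℝ}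

lemma hasDerivAt_left_of_differentiableAt {G : ℝ × ℝ → E} (h : DifferentiableAt ℝ G (t, u)) :
    HasDerivAt (fun τ => G (τ, u)) (fderiv ℝ G (t, u) (1, 0)) t :=
  h.hasFDerivAt.comp_hasDerivAt (f := fun τ => (τ, u)) t
    ((hasDerivAt_id t).prodMk (hasDerivAt_const t u))

lemma hasDerivAt_right_of_differentiableAt {G : ℝ × ℝ → E} (h : DifferentiableAt ℝ G (t, u)) :
    HasDerivAt (fun x => G (t, x)) (fderiv ℝ G (t, u) (0, 1)) u :=
  h.hasFDerivAt.comp_hasDerivAt (f := fun x => (t, x)) u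
    ((hasDerivAt_const u t).prodMk (hasDerivAt_id u))

lemma contDiff_uncurry_deriv {F : ℝ → ℝ → E} {m n : ℕ∞ω}
    (hF : ContDiff ℝ m (Function.uncurry F)) (hnm : n + 1 ≤ m) :
    ContDiff ℝ n (Function.uncurry fun τ x => deriv (F τ) x) :=
  ContDiff.fderiv_apply (f := fun p : ℝ × ℝ => F p.1) (k := fun _ => (1 : ℝ))
    (hF.comp ((contDiff_fst.comp contDiff_fst).prodMk contDiff_snd))
    contDiff_snd contDiff_const hnm

lemma exists_hasDerivAt_mixed_partials {F : ℝ → ℝ → E}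
    (h : ContDiffAt ℝ 2 (Function.uncurry F) (t, u)) :
    ∃ m, HasDerivAt (fun τ => deriv (F τ) u) m t ∧
      HasDerivAt (fun x => deriv (fun τ => F τ x) t) m u := by
  have hsymm : IsSymmSndFDerivAt ℝ (Function.uncurry F) (t, u) := h.isSymmSndFDerivAt (by simp)
  have hdiff : DifferentiableAt ℝ (fderiv ℝ (Function.uncurry F)) (t, u) :=
    (h.fderiv_right (m := 1) (by norm_num)).differentiableAt (by norm_num)
  have hnear : ∀ᶠ p in 𝓝 (t, u), DifferentiableAt ℝ (Function.uncurry F) p :=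
    (h.eventually (by simp)).mono fun p hp => hp.differentiableAt (by norm_num)
  have hfst : ∀ᶠ τ in 𝓝 t, deriv (F τ) u = fderiv ℝ (Function.uncurry F) (τ, u) (0, 1) :=
    ((continuousAt_id.prodMk continuousAt_const).eventually hnear).mono fun τ hτ =>
      (hasDerivAt_right_of_differentiableAt hτ).deriv
  have hsnd : ∀ᶠ x in 𝓝 u,
      deriv (fun τ => F τ x) t = fderiv ℝ (Function.uncurry F) (t, x) (1, 0) :=
    ((continuousAt_const.prodMk continuousAt_id).eventually hnear).mono fun x hx =>
      (hasDerivAt_left_of_differentiableAt hx).deriv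
  refine ⟨fderiv ℝ (fderiv ℝ (Function.uncurry F)) (t, u) (1, 0) (0, 1), ?_, ?_⟩
  · refine HasDerivAt.congr_of_eventuallyEq ?_ hfst
    simpa using (hasDerivAt_left_of_differentiableAt hdiff).clm_apply
      (hasDerivAt_const t ((0, 1) : ℝ × ℝ))
  · refine HasDerivAt.congr_of_eventuallyEq ?_ hsnd
    rw [hsymm]
    simpa using (hasDerivAt_right_of_differentiableAt hdiff).clm_apply
      (hasDerivAt_const u ((1, 0) : ℝ × ℝ))

end MixedPartials

section Components

variable {E F : Type*} [NormedAddCommGroup E] [NormedSpace ℝ E] [NormedAddCommGroup F]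
  [NormedSpace ℝ F] {p : ℝ → E × F} {p' : E × F} {x : ℝ}

lemma hasDerivAt_fst_comp (hp : HasDerivAt p p' x) : HasDerivAt (fun y => (p y).1) p'.1 x :=
  (hasFDerivAt_fst (𝕜 := ℝ) (p := p x)).comp_hasDerivAt x hp

lemma hasDerivAt_snd_comp (hp : HasDerivAt p p' x) : HasDerivAt (fun y => (p y).2) p'.2 x :=
  (hasFDerivAt_snd (𝕜 := ℝ) (p := p x)).comp_hasDerivAt x hp

end Components

section PlaneVectors

variable {w : ℝ × ℝ}

lemma dot2_add_left (v w z : ℝ × ℝ) : dot2 (v + w) z = dot2 v z + dot2 w z := by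
  simp only [dot2, Prod.fst_add, Prod.snd_add]
  ring

lemma dot2_smul_left (a : ℝ) (v w : ℝ × ℝ) : dot2 (a • v) w = a * dot2 v w := by
  simp only [dot2, Prod.smul_fst, Prod.smul_snd, smul_eq_mul]
  ring

lemma dot2_smul_right (a : ℝ) (v w : ℝ × ℝ) : dot2 v (a • w) = a * dot2 v w := by
  simp only [dot2, Prod.smul_fst, Prod.smul_snd, smul_eq_mul]
  ring

lemma dot2_Jrot_Jrot (v w : ℝ × ℝ) : dot2 (Jrot v) (Jrot w) = dot2 v w := by
  simp only [dot2, Jrot]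
  ring

lemma dot2_Jrot_self (v : ℝ × ℝ) : dot2 (Jrot v) v = 0 := by
  simp only [dot2, Jrot]
  ring

lemma dot2_self_Jrot (v : ℝ × ℝ) : dot2 v (Jrot v) = 0 := by
  simp only [dot2, Jrot]
  ring

lemma Jrot_smul (a : ℝ) (v : ℝ × ℝ) : Jrot (a • v) = a • Jrot v := by
  simp [Jrot]

lemma Jrot_Jrot (v : ℝ × ℝ) : Jrot (Jrot v) = -v := rfl

lemma dot2_smul_add_dot2_Jrot_smul {e : ℝ × ℝ} (he : dot2 e e = 1) (v : ℝ × ℝ) :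
    dot2 v e • e + dot2 v (Jrot e) • Jrot e = v := by
  simp only [dot2] at he
  ext <;> simp only [dot2, Jrot, Prod.fst_add, Prod.snd_add, Prod.smul_fst, Prod.smul_snd,
    smul_eq_mul]
  · linear_combination v.1 * he
  · linear_combination v.2 * he

lemma nrm2_sq_s13 (w : ℝ × ℝ) : nrm2 w ^ 2 = w.1 ^ 2 + w.2 ^ 2 :=
  Real.sq_sqrt (by positivity)

lemma sq_add_sq_ne_zero (hw : w ≠ 0) : w.1 ^ 2 + w.2 ^ 2 ≠ 0 := by
  contrapose! hw
  rw [add_eq_zero_iff_of_nonneg (sq_nonneg _) (sq_nonneg _)] at hw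
  exact Prod.ext (sq_eq_zero_iff.1 hw.1) (sq_eq_zero_iff.1 hw.2)

lemma nrm2_ne_zero (hw : w ≠ 0) : nrm2 w ≠ 0 :=
  Real.sqrt_ne_zero'.2 ((sq_add_sq_ne_zero hw).symm.lt_of_le (by positivity))

/-- The unit vector `w / |w|` pointing in the direction of `w`. The Euclidean norm is meant here,
whereas the norm of `ℝ × ℝ` is the supremum norm. -/
def direction (w : ℝ × ℝ) : ℝ × ℝ := (nrm2 w)⁻¹ • w

lemma dot2_direction_self (hw : w ≠ 0) : dot2 (direction w) (direction w) = 1 := by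
  have hne := nrm2_ne_zero hw
  simp only [direction, dot2, Prod.smul_fst, Prod.smul_snd, smul_eq_mul]
  field_simp
  exact (nrm2_sq_s13 w).symm

lemma contDiffAt_direction {n : ℕ∞ω} (hw : w ≠ 0) : ContDiffAt ℝ n direction w := by
  have hnrm : ContDiffAt ℝ n nrm2 w :=
    ((contDiffAt_fst.pow 2).add (contDiffAt_snd.pow 2)).sqrt (sq_add_sq_ne_zero hw)
  exact (hnrm.inv (nrm2_ne_zero hw)).smul contDiffAt_id

variable {p q : ℝ → ℝ × ℝ} {p' q' : ℝ × ℝ} {x : ℝ}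

lemma hasDerivAt_dot2 (hp : HasDerivAt p p' x) (hq : HasDerivAt q q' x) :
    HasDerivAt (fun y => dot2 (p y) (q y)) (dot2 p' (q x) + dot2 (p x) q') x := by
  refine (((hasDerivAt_fst_comp hp).mul (hasDerivAt_fst_comp hq)).add
    ((hasDerivAt_snd_comp hp).mul (hasDerivAt_snd_comp hq))).congr_deriv ?_
  simp only [dot2]
  ring

lemma hasDerivAt_Jrot (hp : HasDerivAt p p' x) : HasDerivAt (fun y => Jrot (p y)) (Jrot p') x :=
  (hasDerivAt_snd_comp hp).neg.prodMk (hasDerivAt_fst_comp hp)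

lemma hasDerivAt_nrm2 (hp : HasDerivAt p p' x) (h0 : p x ≠ 0) :
    HasDerivAt (fun y => nrm2 (p y)) (dot2 p' (direction (p x))) x := by
  refine ((((hasDerivAt_fst_comp hp).pow 2).add ((hasDerivAt_snd_comp hp).pow 2)).sqrt
    (sq_add_sq_ne_zero h0)).congr_deriv ?_
  have hne := nrm2_ne_zero h0
  simp only [dot2, direction, Prod.smul_fst, Prod.smul_snd, smul_eq_mul]
  simp only [nrm2, Pi.add_apply, Pi.pow_apply] at hne ⊢
  field_simp
  ring

lemma hasDerivAt_direction (hp : HasDerivAt p p' x) (h0 : p x ≠ 0) :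
    HasDerivAt (fun y => direction (p y))
      (((nrm2 (p x))⁻¹ * dot2 p' (Jrot (direction (p x)))) • Jrot (direction (p x))) x := by
  set e := direction (p x) with he
  have hnormal : p' - dot2 p' e • e = dot2 p' (Jrot e) • Jrot e :=
    sub_eq_of_eq_add' (dot2_smul_add_dot2_Jrot_smul (dot2_direction_self h0) p').symm
  refine (((hasDerivAt_nrm2 hp h0).inv (nrm2_ne_zero h0)).smul hp).congr_deriv ?_
  rw [mul_smul, ← hnormal, ← he]
  simp only [he, direction, Pi.inv_apply]
  module

end PlaneVectors

section Frenet

variable {c : ℝ → ℝ × ℝ} {u : ℝ}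

lemma dot2_tangentC_self (h0 : deriv c u ≠ 0) : dot2 (tangentC c u) (tangentC c u) = 1 :=
  dot2_direction_self h0

lemma dot2_normalC_self (h0 : deriv c u ≠ 0) : dot2 (normalC c u) (normalC c u) = 1 := by
  rw [normalC, dot2_Jrot_Jrot, dot2_tangentC_self h0]

lemma curvature_eq_inv_mul_dot2 (c : ℝ → ℝ × ℝ) (u : ℝ) :
    curvature c u = (nrm2 (deriv c u))⁻¹ * dot2 (deriv (tangentC c) u) (normalC c u) :=
  dot2_smul_left _ _ _

lemma frenet_tangentC (hc : DifferentiableAt ℝ (deriv c) u) (h0 : deriv c u ≠ 0) :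
    HasDerivAt (tangentC c) ((nrm2 (deriv c u) * curvature c u) • normalC c u) u := by
  have hT : HasDerivAt (tangentC c) (((nrm2 (deriv c u))⁻¹ *
      dot2 (deriv (deriv c) u) (normalC c u)) • normalC c u) u :=
    hasDerivAt_direction hc.hasDerivAt h0
  have hk : nrm2 (deriv c u) * curvature c u
      = (nrm2 (deriv c u))⁻¹ * dot2 (deriv (deriv c) u) (normalC c u) := by
    rw [curvature_eq_inv_mul_dot2, mul_inv_cancel_left₀ (nrm2_ne_zero h0), hT.deriv,
      dot2_smul_left, dot2_normalC_self h0, mul_one]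
  rwa [hk]

lemma frenet_normalC (hc : DifferentiableAt ℝ (deriv c) u) (h0 : deriv c u ≠ 0) :
    HasDerivAt (normalC c) (-(nrm2 (deriv c u) * curvature c u) • tangentC c u) u := by
  refine (hasDerivAt_Jrot (frenet_tangentC hc h0)).congr_deriv ?_
  rw [Jrot_smul, normalC, Jrot_Jrot, smul_neg, neg_smul]

end Frenet

lemma hess2_eq_fderiv_fderiv {ψ : ℝ × ℝ → ℝ} {x : ℝ × ℝ}
    (hψ : DifferentiableAt ℝ (fderiv ℝ ψ) x) (v : ℝ × ℝ) :
    hess2 ψ x v = fderiv ℝ (fderiv ℝ ψ) x v v := by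
  rw [hess2, fderiv_clm_apply hψ (differentiableAt_const v)]
  simp

/-- First-order data of a normal variation: at time `t` the curve `γ t` is immersed and moves with
normal velocity `f`. Both conditions are imposed at the single time `t`, so that differential
identities for `γ` hold pointwise in time. -/
structure IsNormalVariation (γ : ℝ → ℝ → ℝ × ℝ) (f : ℝ → ℝ) (t : ℝ) : Prop where
  contDiff : ContDiff ℝ 3 (Function.uncurry γ)
  regular : ∀ u, deriv (γ t) u ≠ 0
  velocity : ∀ u, deriv (fun τ => γ τ u) t = f u • normalC (γ t) u

namespace IsNormalVariation

variable {γ : ℝ → ℝ → ℝ × ℝ} {f : ℝ → ℝ} {t : ℝ}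

lemma contDiff_deriv (h : IsNormalVariation γ f t) :
    ContDiff ℝ 2 (Function.uncurry fun τ x => deriv (γ τ) x) :=
  contDiff_uncurry_deriv h.contDiff (by norm_num)

lemma differentiable_deriv (h : IsNormalVariation γ f t) : Differentiable ℝ (deriv (γ t)) :=
  fun u => (hasDerivAt_right_of_differentiableAt
    (h.contDiff_deriv.differentiable (by norm_num) (t, u))).differentiableAt

lemma contDiffAt_tangentC (h : IsNormalVariation γ f t) (u : ℝ) :
    ContDiffAt ℝ 2 (Function.uncurry fun τ x => tangentC (γ τ) x) (t, u) :=
  (contDiffAt_direction (h.regular u)).comp (f := Function.uncurry fun τ x => deriv (γ τ) x)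
    (t, u) h.contDiff_deriv.contDiffAt

lemma hasDerivAt (h : IsNormalVariation γ f t) (u : ℝ) :
    HasDerivAt (fun τ => γ τ u) (f u • normalC (γ t) u) t := by
  rw [← h.velocity u]
  exact (hasDerivAt_left_of_differentiableAt
    (h.contDiff.differentiable (by norm_num) (t, u))).differentiableAt.hasDerivAt

lemma exists_hasDerivAt_deriv (h : IsNormalVariation γ f t) (u : ℝ) :
    ∃ m, HasDerivAt (fun τ => deriv (γ τ) u) m t ∧
      HasDerivAt (fun x => f x • normalC (γ t) x) m u := by
  simpa only [h.velocity] using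
    exists_hasDerivAt_mixed_partials (h.contDiff.contDiffAt.of_le (by norm_num) :
      ContDiffAt ℝ 2 (Function.uncurry γ) (t, u))

lemma differentiable_velocity (h : IsNormalVariation γ f t) : Differentiable ℝ f := by
  intro u
  obtain ⟨m, -, hm⟩ := h.exists_hasDerivAt_deriv u
  have hf : f = fun x => dot2 (f x • normalC (γ t) x) (normalC (γ t) x) := by
    funext x
    rw [dot2_smul_left, dot2_normalC_self (h.regular x), mul_one]
  rw [hf]
  exact (hasDerivAt_dot2 hm
    (frenet_normalC (h.differentiable_deriv u) (h.regular u))).differentiableAt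

lemma hasDerivAt_deriv (h : IsNormalVariation γ f t) (u : ℝ) :
    HasDerivAt (fun τ => deriv (γ τ) u)
      (f u • -(nrm2 (deriv (γ t) u) * curvature (γ t) u) • tangentC (γ t) u
        + deriv f u • normalC (γ t) u) t := by
  obtain ⟨m, hm, hfN⟩ := h.exists_hasDerivAt_deriv u
  have hN := frenet_normalC (h.differentiable_deriv u) (h.regular u)
  rwa [hfN.unique ((h.differentiable_velocity u).hasDerivAt.smul hN)] at hm

lemma hasDerivAt_nrm2_deriv (h : IsNormalVariation γ f t) (u : ℝ) :
    HasDerivAt (fun τ => nrm2 (deriv (γ τ) u))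
      (-(f u * curvature (γ t) u * nrm2 (deriv (γ t) u))) t := by
  refine (hasDerivAt_nrm2 (h.hasDerivAt_deriv u) (h.regular u)).congr_deriv ?_
  change dot2 _ (tangentC (γ t) u) = _
  rw [dot2_add_left, dot2_smul_left, dot2_smul_left, dot2_smul_left,
    dot2_tangentC_self (h.regular u), normalC, dot2_Jrot_self]
  ring

lemma hasDerivAt_tangentC (h : IsNormalVariation γ f t) (u : ℝ) :
    HasDerivAt (fun τ => tangentC (γ τ) u) (arcDeriv (γ t) f u • normalC (γ t) u) t := by
  refine (hasDerivAt_direction (h.hasDerivAt_deriv u) (h.regular u)).congr_deriv ?_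
  change (_ * dot2 _ (normalC (γ t) u)) • normalC (γ t) u = _
  rw [dot2_add_left, dot2_smul_left, dot2_smul_left, dot2_smul_left,
    dot2_normalC_self (h.regular u), normalC, dot2_self_Jrot, arcDeriv, smul_eq_mul]
  congr 1
  ring

lemma hasDerivAt_normalC (h : IsNormalVariation γ f t) (u : ℝ) :
    HasDerivAt (fun τ => normalC (γ τ) u) (-arcDeriv (γ t) f u • tangentC (γ t) u) t := by
  refine (hasDerivAt_Jrot (h.hasDerivAt_tangentC u)).congr_deriv ?_
  rw [Jrot_smul, normalC, Jrot_Jrot, smul_neg, neg_smul]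

-- In terms of the tangent angle `θ` this reads `θ_ut = θ_tu`. The terms `⟨T_u, N_t⟩` and
-- `⟨T_t, N_u⟩` vanish, since `T_u` and `T_t` are normal while `N_t` and `N_u` are tangential.
lemma hasDerivAt_dot2_deriv_tangentC (h : IsNormalVariation γ f t) (u : ℝ) :
    HasDerivAt (fun τ => dot2 (deriv (tangentC (γ τ)) u) (normalC (γ τ) u))
      (deriv (arcDeriv (γ t) f) u) t := by
  obtain ⟨m, hut, htu⟩ := exists_hasDerivAt_mixed_partials (h.contDiffAt_tangentC u)
  have htime := hasDerivAt_dot2 hut (h.hasDerivAt_normalC u)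
  have hspace := hasDerivAt_dot2 htu
    (frenet_normalC (h.differentiable_deriv u) (h.regular u))
  have hfs : (fun x => dot2 (deriv (fun τ => tangentC (γ τ) x) t) (normalC (γ t) x))
      = arcDeriv (γ t) f := by
    funext x
    rw [(h.hasDerivAt_tangentC x).deriv, dot2_smul_left, dot2_normalC_self (h.regular x), mul_one]
  rw [hfs] at hspace
  refine htime.congr_deriv ?_
  rw [hspace.deriv, (h.hasDerivAt_tangentC u).deriv,
    (frenet_tangentC (h.differentiable_deriv u) (h.regular u)).deriv]
  simp only [dot2_smul_left, dot2_smul_right, normalC, dot2_Jrot_self, mul_zero]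

lemma hasDerivAt_curvature (h : IsNormalVariation γ f t) (u : ℝ) :
    HasDerivAt (fun τ => curvature (γ τ) u)
      (arcDeriv (γ t) (arcDeriv (γ t) f) u + f u * curvature (γ t) u ^ 2) t := by
  have hv := nrm2_ne_zero (h.regular u)
  simp only [curvature_eq_inv_mul_dot2 (γ _)]
  refine (((h.hasDerivAt_nrm2_deriv u).inv hv).mul
    (h.hasDerivAt_dot2_deriv_tangentC u)).congr_deriv ?_
  rw [arcDeriv, smul_eq_mul, curvature_eq_inv_mul_dot2]
  simp only [Pi.inv_apply]
  field_simp
  ring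

lemma hasDerivAt_fderiv_normalC (h : IsNormalVariation γ f t) {ψ : ℝ × ℝ → ℝ} {u : ℝ}
    (hψ : DifferentiableAt ℝ (fderiv ℝ ψ) (γ t u)) :
    HasDerivAt (fun τ => fderiv ℝ ψ (γ τ u) (normalC (γ τ) u))
      (f u * hess2 ψ (γ t u) (normalC (γ t) u)
        - fderiv ℝ ψ (γ t u) (tangentC (γ t) u) * arcDeriv (γ t) f u) t := by
  have hgrad : HasDerivAt (fun τ => fderiv ℝ ψ (γ τ u))
      (fderiv ℝ (fderiv ℝ ψ) (γ t u) (f u • normalC (γ t) u)) t :=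
    hψ.hasFDerivAt.comp_hasDerivAt t (h.hasDerivAt u)
  refine (hgrad.clm_apply (h.hasDerivAt_normalC u)).congr_deriv ?_
  simp only [hess2_eq_fderiv_fderiv hψ, map_smul, smul_apply, smul_eq_mul]
  ring

end IsNormalVariation

theorem psiCurvature_evolution_general
    {γ : ℝ → ℝ → ℝ × ℝ} {f : ℝ → ℝ} {ψ : ℝ × ℝ → ℝ} {t u : ℝ}
    (h : IsNormalVariation γ f t) (hψ : ContDiffAt ℝ 2 ψ (γ t u)) :
    HasDerivAt (fun τ => psiCurv ψ (γ τ) u)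
      (arcDeriv (γ t) (arcDeriv (γ t) f) u
        + fderiv ℝ ψ (γ t u) (tangentC (γ t) u) * arcDeriv (γ t) f u
        + f u * (curvature (γ t) u ^ 2 - hess2 ψ (γ t u) (normalC (γ t) u))) t := by
  have hdψ : DifferentiableAt ℝ (fderiv ℝ ψ) (γ t u) :=
    (hψ.fderiv_right (m := 1) (by norm_num)).differentiableAt (by norm_num)
  refine ((h.hasDerivAt_curvature u).sub (h.hasDerivAt_fderiv_normalC hdψ)).congr_deriv ?_
  ring

/-- under ψMCF the ψ-curvature satisfies
∂_t k_ψ = ∂_s² k_ψ + ⟨∇ψ, T⟩ ∂_s k_ψ + k_ψ (k² − Hess ψ(N,N)). -/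
theorem psiCurvature_evolution
    (T : ℝ) (hT : 0 < T) (γ : ℝ → ℝ → ℝ × ℝ)
    (hfam : SmoothFamily γ)
    (hclosed : ∀ t ∈ Set.Ico (0:ℝ) T, IsClosedCurve (γ t))
    (ψ : ℝ × ℝ → ℝ) (U : Set (ℝ × ℝ)) (hU : IsOpen U)
    (hψ : ContDiffOn ℝ (⊤ : ℕ∞) ψ U)
    (him : ∀ t ∈ Set.Ico (0:ℝ) T, ∀ u : ℝ, γ t u ∈ U)
    (hflow : ∀ t ∈ Set.Ico (0:ℝ) T, ∀ u : ℝ,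
      deriv (fun τ => γ τ u) t = psiCurv ψ (γ t) u • normalC (γ t) u) :
    ∀ t ∈ Set.Ico (0:ℝ) T, ∀ u : ℝ,
      deriv (fun τ => psiCurv ψ (γ τ) u) t
        = arcDeriv (γ t) (fun u' => arcDeriv (γ t) (fun u'' => psiCurv ψ (γ t) u'') u') u
          + fderiv ℝ ψ (γ t u) (tangentC (γ t) u)
              * arcDeriv (γ t) (fun u' => psiCurv ψ (γ t) u') u
          + psiCurv ψ (γ t) u
              * ((curvature (γ t) u) ^ 2 - hess2 ψ (γ t u) (normalC (γ t) u)) := by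
  intro t ht u
  have hvar : IsNormalVariation γ (psiCurv ψ (γ t)) t :=
    ⟨hfam.of_le ENat.LEInfty.out, (hclosed t ht).regular, hflow t ht⟩
  have hψu : ContDiffAt ℝ 2 ψ (γ t u) :=
    (hψ.contDiffAt (hU.mem_nhds (him t ht u))).of_le ENat.LEInfty.out
  exact (psiCurvature_evolution_general hvar hψu).deriv
end
end
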